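/- Let G be a finite group. The power graph of G is chordal if and only if the power graph neither admits a graph embedding of the cycle graph on n vertices for any n with 4 ≤ n ≤ 20, nor admits a graph embedding of the path graph on 20 vertices. -/

import Mathlib

/-- The power graph of a group: distinct `x` and `y` are adjacent iff one is a power
of the other. -/
def powerGraph (G : Type*) [Group G] : SimpleGraph G :=
  SimpleGraph.fromRel (fun x y => x ∈ Subgroup.zpowers y)

/-- A graph is chordal if it has no induced cycle on at least 4 vertices. -/
def IsChordal {V : Type*} (Γ : SimpleGraph V) : Prop :=
  ∀ n : ℕ, 4 ≤ n → IsEmpty (SimpleGraph.cycleGraph n ↪g Γ)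

/-!
An induced cycle on more than 20 vertices contains an induced path on 20 vertices, so the point is
that a chordal power graph contains no such path.

Join two subgroups of prime order when their orders differ and they commute elementwise. Inserting
the product of two generators between consecutive vertices turns a cycle of this graph into an
induced cycle of the power graph, so if the power graph is chordal, this graph is a forest. Along an
induced path of the power graph the power relation alternates in direction, and suitable elements of
prime order below the ten minima of a path on 20 vertices generate the vertices of a nonbacktracking
walk of length 9 in the forest.

The group is torsion and acts on the forest by conjugation. As for finite groups acting on trees,
two elements that fix vertices of the walk fix a common vertex of it, and by the Helly property of
intervals a single vertex `A` of the walk is fixed by all generators. On the longer side of `A` the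
generator of each vertex normalizes all the vertices between it and `A`. Since the automorphism
group of a group of prime order is cyclic, two vertices at distance at least 3 then have a common
neighbour, which is impossible in a forest.
-/

open SimpleGraph Subgroup

open scoped commutatorElement

section AcyclicGraphs

variable {V : Type*} {Γ : SimpleGraph V}

theorem eq_of_dist_eq_of_isAcyclic (hΓ : Γ.IsAcyclic) {u v v' w : V}
    (hv : Γ.Reachable u v) (hvw : Γ.Reachable v w)
    (hv' : Γ.Reachable u v') (hv'w : Γ.Reachable v' w)
    (hgeod : Γ.dist u v + Γ.dist v w = Γ.dist u w) (huv : Γ.dist u v' = Γ.dist u v)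
    (hvw_dist : Γ.dist v' w = Γ.dist v w) : v' = v := by
  obtain ⟨p, hp⟩ := hv.exists_walk_length_eq_dist
  obtain ⟨q, hq⟩ := hvw.exists_walk_length_eq_dist
  obtain ⟨p', hp'⟩ := hv'.exists_walk_length_eq_dist
  obtain ⟨q', hq'⟩ := hv'w.exists_walk_length_eq_dist
  have hpq : (p.append q).IsPath :=
    Walk.isPath_of_length_eq_dist _ (by rw [Walk.length_append, hp, hq, hgeod])
  have hpq' : (p'.append q').IsPath :=
    Walk.isPath_of_length_eq_dist _ (by
      rw [Walk.length_append, hp', hq', huv, hvw_dist, hgeod])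
  have happend : p'.append q' = p.append q :=
    congrArg Subtype.val ((hΓ.subsingleton_path u w).elim ⟨_, hpq'⟩ ⟨_, hpq⟩)
  have hlen : p'.length = p.length := by rw [hp, hp', huv]
  calc v' = (p'.append q').getVert p'.length := by simp [Walk.getVert_append']
    _ = (p.append q).getVert p.length := by rw [happend, hlen]
    _ = v := by simp [Walk.getVert_append']

theorem dist_iso_apply_le (f : Γ ≃g Γ) {u v : V} (huv : Γ.Reachable u v) :
    Γ.dist (f u) (f v) ≤ Γ.dist u v := by
  obtain ⟨p, hp⟩ := huv.exists_walk_length_eq_dist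
  rw [← hp, ← Walk.length_map f.toHom p]
  exact dist_le _

theorem dist_iso_apply (f : Γ ≃g Γ) {u v : V} (huv : Γ.Reachable u v) :
    Γ.dist (f u) (f v) = Γ.dist u v := by
  refine (dist_iso_apply_le f huv).antisymm ?_
  simpa using dist_iso_apply_le f.symm (huv.map f.toHom)

/-- The terms `s 0, …, s n` form a walk of length `n` in `Γ` that never returns along the edge it
has just traversed; later terms of `s` are arbitrary. -/
structure IsNonbacktracking (Γ : SimpleGraph V) (n : ℕ) (s : ℕ → V) : Prop where
  adj : ∀ i < n, Γ.Adj (s i) (s (i + 1))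
  ne : ∀ i, i + 2 ≤ n → s i ≠ s (i + 2)

namespace IsNonbacktracking

variable {n : ℕ} {s : ℕ → V}

theorem shift (hs : IsNonbacktracking Γ n s) {m k : ℕ} (hmk : m + k ≤ n) :
    IsNonbacktracking Γ k (fun i => s (m + i)) where
  adj i hi := hs.adj (m + i) (by omega)
  ne i hi := hs.ne (m + i) (by omega)

theorem reverse (hs : IsNonbacktracking Γ n s) :
    IsNonbacktracking Γ n (fun i => s (n - i)) where
  adj i hi := by
    have h := (hs.adj (n - (i + 1)) (by omega)).symm
    rwa [show n - (i + 1) + 1 = n - i by omega] at h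
  ne i hi := by
    have h := (hs.ne (n - (i + 2)) (by omega)).symm
    rwa [show n - (i + 2) + 2 = n - i by omega] at h

theorem reachable (hs : IsNonbacktracking Γ n s) {i j : ℕ} (hij : i ≤ j) (hj : j ≤ n) :
    Γ.Reachable (s i) (s j) := by
  induction j, hij using Nat.le_induction with
  | base => rfl
  | succ j _ ih => exact (ih (by omega)).trans (hs.adj j (by omega)).reachable

theorem dist_zero (hs : IsNonbacktracking Γ n s) (hΓ : Γ.IsAcyclic) :
    ∀ i ≤ n, Γ.dist (s 0) (s i) = i
  | 0, _ => dist_self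
  | 1, h => dist_eq_one_iff_adj.2 (hs.adj 0 h)
  | i + 2, h => by
    have ih₀ := hs.dist_zero hΓ i (by omega)
    have ih₁ := hs.dist_zero hΓ (i + 1) (by omega)
    have hadj₀ := hs.adj i (by omega)
    have hadj₁ := hs.adj (i + 1) (by omega)
    rcases hΓ.dist_eq_dist_add_one_of_adj_of_reachable (s 0) hadj₁
      (hs.reachable (Nat.zero_le _) (by omega)) with hback | hforth
    · change Γ.dist (s 0) (s (i + 1)) = Γ.dist (s 0) (s (i + 2)) + 1 at hback
      have hd₀ : Γ.dist (s i) (s (i + 1)) = 1 := dist_eq_one_iff_adj.2 hadj₀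
      have hd₁ : Γ.dist (s (i + 2)) (s (i + 1)) = 1 := dist_eq_one_iff_adj.2 hadj₁.symm
      exact absurd (eq_of_dist_eq_of_isAcyclic hΓ (hs.reachable (Nat.zero_le _) (by omega))
        hadj₀.reachable (hs.reachable (Nat.zero_le _) h) hadj₁.symm.reachable
        (by omega) (by omega) (by omega)).symm (hs.ne i h)
    · rw [hforth, ih₁]

theorem dist_eq (hs : IsNonbacktracking Γ n s) (hΓ : Γ.IsAcyclic) {i j : ℕ} (hij : i ≤ j)
    (hj : j ≤ n) : Γ.dist (s i) (s j) = j - i := by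
  simpa [Nat.add_sub_cancel' hij] using
    (hs.shift (m := i) (k := j - i) (by omega)).dist_zero hΓ (j - i) le_rfl

theorem not_adj (hs : IsNonbacktracking Γ n s) (hΓ : Γ.IsAcyclic) {i j : ℕ} (hij : i + 2 ≤ j)
    (hj : j ≤ n) : ¬ Γ.Adj (s i) (s j) := fun hadj => by
  have hdist := hs.dist_eq hΓ (by omega : i ≤ j) hj
  rw [dist_eq_one_iff_adj.2 hadj] at hdist
  omega

theorem not_adj_of_adj (hs : IsNonbacktracking Γ n s) (hΓ : Γ.IsAcyclic) {i j : ℕ}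
    (hij : i + 3 ≤ j) (hj : j ≤ n) {w : V} (hiw : Γ.Adj (s i) w) : ¬ Γ.Adj w (s j) := fun hwj => by
  have hdist := hs.dist_eq hΓ (by omega : i ≤ j) hj
  have hle : Γ.dist (s i) (s j) ≤ 2 := dist_le (.cons hiw (.cons hwj .nil))
  omega

theorem apply_eq_of_between (hs : IsNonbacktracking Γ n s) (hΓ : Γ.IsAcyclic) {f : Γ ≃g Γ}
    {i j k : ℕ} (hik : i ≤ k) (hkj : k ≤ j) (hj : j ≤ n)
    (hfi : f (s i) = s i) (hfj : f (s j) = s j) : f (s k) = s k := by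
  have hri := hs.reachable hik (hkj.trans hj)
  have hrj := hs.reachable hkj hj
  have hri' : Γ.Reachable (s i) (f (s k)) := by simpa [hfi] using hri.map f.toHom
  have hrj' : Γ.Reachable (f (s k)) (s j) := by simpa [hfj] using hrj.map f.toHom
  refine eq_of_dist_eq_of_isAcyclic hΓ hri hrj hri' hrj' ?_ ?_ ?_
  · rw [hs.dist_eq hΓ hik (hkj.trans hj), hs.dist_eq hΓ hkj hj,
      hs.dist_eq hΓ (hik.trans hkj) hj]
    omega
  · simpa [hfi] using dist_iso_apply f hri
  · simpa [hfj] using dist_iso_apply f hrj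

-- Concatenating the translates of the walk by the powers of `f` gives an infinite geodesic.
theorem not_isOfFinOrder (hs : IsNonbacktracking Γ n s) (hΓ : Γ.IsAcyclic) (hn : 0 < n)
    {f : Γ ≃g Γ} (hend : s n = f (s 0)) (hturn : s (n - 1) ≠ f (s 1)) :
    ¬ IsOfFinOrder f := by
  set S : ℕ → V := fun i => (f ^ (i / n)) (s (i % n)) with hS
  have hSmul (q r : ℕ) (hr : r ≤ n) : S (n * q + r) = (f ^ q) (s r) := by
    rcases hr.lt_or_eq with hr | rfl
    · simp [hS, Nat.mul_add_div hn, Nat.div_eq_of_lt hr, Nat.mod_eq_of_lt hr]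
    · rw [hend, ← RelIso.mul_apply, ← pow_succ]
      simp [hS, Nat.mul_add_div hn, hn]
  have hSnb (N : ℕ) : IsNonbacktracking Γ N S := by
    constructor
    · intro i _
      have hr : i % n < n := Nat.mod_lt i hn
      rw [← Nat.div_add_mod i n, hSmul _ _ hr.le, add_assoc, hSmul _ _ hr]
      exact (f ^ (i / n)).map_adj_iff.2 (hs.adj _ hr)
    · intro i _
      have hr : i % n < n := Nat.mod_lt i hn
      rw [← Nat.div_add_mod i n, hSmul _ _ hr.le, add_assoc]
      rcases Nat.lt_or_ge (i % n + 1) n with hr' | hr'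
      · rw [hSmul _ _ hr']
        exact (f ^ (i / n)).injective.ne (hs.ne _ hr')
      · rw [show n * (i / n) + (i % n + 2) = n * (i / n + 1) + 1 by rw [mul_add]; omega,
          hSmul _ _ hn, pow_succ, RelIso.mul_apply, show i % n = n - 1 by omega]
        exact (f ^ (i / n)).injective.ne hturn
  rw [isOfFinOrder_iff_pow_eq_one]
  rintro ⟨k, hk, hfk⟩
  have hreturn : S (n * k) = S 0 :=
    calc S (n * k) = (f ^ k) (s 0) := hSmul k 0 (Nat.zero_le n)
      _ = (f ^ 0) (s 0) := by rw [hfk, pow_zero]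
      _ = S 0 := (hSmul 0 0 (Nat.zero_le n)).symm
  have hdist := (hSnb (n * k)).dist_eq hΓ (Nat.zero_le _) le_rfl
  rw [hreturn, dist_self] at hdist
  have : 0 < n * k := Nat.mul_pos hn hk
  omega

-- The walk followed by its mirror image under `g` is translated by `g * f`.
theorem not_isOfFinOrder_mul (hs : IsNonbacktracking Γ (n + 1) s) (hΓ : Γ.IsAcyclic)
    {f g : Γ ≃g Γ} (hf : f (s 0) = s 0) (hf' : f (s 1) ≠ s 1)
    (hg : g (s (n + 1)) = s (n + 1)) (hg' : g (s n) ≠ s n) : ¬ IsOfFinOrder (g * f) := by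
  set w : ℕ → V := fun i => if i ≤ n + 1 then s i else g (s (2 * (n + 1) - i)) with hw
  have hwl (i : ℕ) (hi : i ≤ n + 1) : w i = s i := if_pos hi
  have hwr (i j : ℕ) (hij : i + j = 2 * (n + 1)) (hi : n + 1 ≤ i) : w i = g (s j) := by
    obtain rfl | hi := hi.eq_or_lt
    · obtain rfl : j = n + 1 := by omega
      rw [hwl _ le_rfl, hg]
    · rw [hw, ← hij]
      simp [hi.not_ge]
  have hwnb : IsNonbacktracking Γ (2 * (n + 1)) w := by
    constructor
    · intro i hi
      rcases Nat.lt_or_ge i (n + 1) with hin | hin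
      · rw [hwl _ hin.le, hwl _ hin]
        exact hs.adj i hin
      · obtain ⟨j, hj⟩ : ∃ j, i + (j + 1) = 2 * (n + 1) := ⟨2 * (n + 1) - i - 1, by omega⟩
        rw [hwr i (j + 1) hj hin, hwr (i + 1) j (by omega) (by omega), g.map_adj_iff]
        exact (hs.adj j (by omega)).symm
    · intro i hi
      rcases lt_trichotomy i n with hin | rfl | hin
      · rw [hwl _ (by omega), hwl _ (by omega)]
        exact hs.ne i (by omega)
      · rw [hwl _ (by omega), hwr (i + 2) i (by omega) (by omega)]
        exact hg'.symm
      · obtain ⟨j, hj⟩ : ∃ j, i + (j + 2) = 2 * (n + 1) := ⟨2 * (n + 1) - i - 2, by omega⟩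
        rw [hwr i (j + 2) hj hin, hwr (i + 2) j (by omega) (by omega)]
        exact g.injective.ne (hs.ne j (by omega)).symm
  refine hwnb.not_isOfFinOrder hΓ (by omega) ?_ ?_
  · rw [hwr (2 * (n + 1)) 0 (by omega) (by omega), hwl 0 (by omega), RelIso.mul_apply, hf]
  · rw [hwr _ 1 (by omega) (by omega), hwl 1 (by omega), RelIso.mul_apply]
    exact g.injective.ne hf'.symm

theorem exists_common_fixed (hs : IsNonbacktracking Γ n s) (hΓ : Γ.IsAcyclic)
    {f g : Γ ≃g Γ} (hgf : IsOfFinOrder (g * f)) {i j : ℕ} (hij : i ≤ j) (hj : j ≤ n)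
    (hf : f (s i) = s i) (hg : g (s j) = s j) :
    ∃ k ≤ j, f (s k) = s k ∧ g (s k) = s k := by
  obtain ⟨d, rfl⟩ := Nat.exists_eq_add_of_le hij
  induction d generalizing i with
  | zero => exact ⟨i, le_rfl, hf, hg⟩
  | succ d ih =>
    by_cases hf' : f (s (i + 1)) = s (i + 1)
    · obtain ⟨k, hk, hfix⟩ := ih hf' (by omega) (by omega)
        (by rwa [show i + 1 + d = i + (d + 1) by omega])
      exact ⟨k, by omega, hfix⟩
    by_cases hg' : g (s (i + d)) = s (i + d)
    · obtain ⟨k, hk, hfix⟩ := ih hf (by omega) (by omega) hg'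
      exact ⟨k, by omega, hfix⟩
    · exact absurd hgf ((hs.shift hj).not_isOfFinOrder_mul hΓ hf hf' hg hg')

end IsNonbacktracking

theorem exists_forall_mem_of_ordConnected {ι : Type*} [Finite ι] [Nonempty ι] {S : ι → Set ℕ}
    (hS : ∀ i, (S i).OrdConnected) (hmeet : ∀ i j, (S i ∩ S j).Nonempty) :
    ∃ m, ∀ i, m ∈ S i := by
  obtain ⟨i₀, hi₀⟩ := Finite.exists_max fun i => sInf (S i)
  refine ⟨sInf (S i₀), fun i => ?_⟩
  obtain ⟨k, hki, hki₀⟩ := hmeet i i₀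
  exact (hS i).out (Nat.sInf_mem ⟨k, hki⟩) hki ⟨hi₀ i, Nat.sInf_le hki₀⟩

theorem IsNonbacktracking.exists_forall_fixed {n : ℕ} {s : ℕ → V}
    (hs : IsNonbacktracking Γ n s) (hΓ : Γ.IsAcyclic) {f : ℕ → Γ ≃g Γ}
    (hfix : ∀ i ≤ n, f i (s i) = s i) (hfin : ∀ i j, IsOfFinOrder (f i * f j)) :
    ∃ m ≤ n, ∀ i ≤ n, f i (s m) = s m := by
  obtain ⟨m, hm⟩ := exists_forall_mem_of_ordConnected (ι := Fin (n + 1))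
    (S := fun i => {k | k ≤ n ∧ f i (s k) = s k})
    (fun i => ⟨fun a ha b hb k hk =>
      ⟨hk.2.trans hb.1, hs.apply_eq_of_between hΓ hk.1 hk.2 hb.1 ha.2 hb.2⟩⟩)
    (fun i j => by
      rcases le_total i j with hij | hij
      · obtain ⟨k, hk, hi, hj⟩ := hs.exists_common_fixed hΓ (hfin j i) hij
          j.is_le (hfix i i.is_le) (hfix j j.is_le)
        exact ⟨k, ⟨hk.trans j.is_le, hi⟩, ⟨hk.trans j.is_le, hj⟩⟩
      · obtain ⟨k, hk, hj, hi⟩ := hs.exists_common_fixed hΓ (hfin i j) hij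
          i.is_le (hfix j j.is_le) (hfix i i.is_le)
        exact ⟨k, ⟨hk.trans i.is_le, hi⟩, ⟨hk.trans i.is_le, hj⟩⟩)
  exact ⟨m, (hm 0).1, fun i hi => (hm ⟨i, Nat.lt_succ_of_le hi⟩).2⟩

end AcyclicGraphs

section InducedPathsAndCycles

variable {V : Type*} {Γ : SimpleGraph V}

/-- The first `n` terms of the sequence `p` are the successive vertices of an induced path of
`Γ`. Indexing by `ℕ` avoids arithmetic in `Fin n`; terms from index `n` on are arbitrary. -/
structure IsInducedPath (Γ : SimpleGraph V) (n : ℕ) (p : ℕ → V) : Prop where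
  injOn : Set.InjOn p (Set.Iio n)
  adj_iff : ∀ k < n, ∀ l < n, Γ.Adj (p k) (p l) ↔ k + 1 = l ∨ l + 1 = k

namespace IsInducedPath

variable {n : ℕ} {p : ℕ → V}

theorem of_embedding (e : pathGraph (n + 1) ↪g Γ) :
    IsInducedPath Γ (n + 1) fun k => e (Fin.ofNat (n + 1) k) where
  injOn k hk l hl h := by
    simpa [Fin.ext_iff, Nat.mod_eq_of_lt (Set.mem_Iio.1 hk), Nat.mod_eq_of_lt (Set.mem_Iio.1 hl)]
      using h
  adj_iff k hk l hl := by
    rw [e.map_adj_iff, pathGraph_adj, Fin.val_ofNat, Fin.val_ofNat, Nat.mod_eq_of_lt hk,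
      Nat.mod_eq_of_lt hl]

theorem reverse (hp : IsInducedPath Γ n p) : IsInducedPath Γ n fun k => p (n - 1 - k) where
  injOn k hk l hl h := by
    rw [Set.mem_Iio] at hk hl
    have := hp.injOn (Set.mem_Iio.2 (by omega)) (Set.mem_Iio.2 (by omega)) h
    omega
  adj_iff k hk l hl := by
    rw [hp.adj_iff _ (by omega) _ (by omega)]
    omega

end IsInducedPath

theorem cycleGraph_adj_iff_val {n : ℕ} (u v : Fin n) : (cycleGraph n).Adj u v ↔
    n ≠ 1 ∧ ((u.val = v.val + 1 ∨ (u.val = 0 ∧ v.val + 1 = n)) ∨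
      (v.val = u.val + 1 ∨ (v.val = 0 ∧ u.val + 1 = n))) := by
  have hsub (a b : Fin n) :
      (a - b).val = 1 ↔ n ≠ 1 ∧ (a.val = b.val + 1 ∨ (a.val = 0 ∧ b.val + 1 = n)) := by
    rw [Fin.val_sub]
    rcases Nat.lt_or_ge a.val b.val with hab | hab
    · rw [Nat.mod_eq_of_lt (by omega)]
      omega
    · rw [show n - b.val + a.val = (a.val - b.val) + n by omega, Nat.add_mod_right,
        Nat.mod_eq_of_lt (by omega)]
      omega
  rw [cycleGraph_adj', hsub, hsub, ← and_or_left]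

theorem nonempty_pathGraph_embedding_cycleGraph {k n : ℕ} (hkn : k < n) :
    Nonempty (pathGraph k ↪g cycleGraph n) := by
  refine ⟨⟨Fin.castLEEmb hkn.le, fun {u v} => ?_⟩⟩
  rw [cycleGraph_adj_iff_val, pathGraph_adj]
  simp only [Fin.castLEEmb_apply, Fin.val_castLE]
  omega

theorem isChordal_of_isEmpty_embedding {k : ℕ}
    (hcycle : ∀ n, 4 ≤ n → n ≤ k → IsEmpty (cycleGraph n ↪g Γ))
    (hpath : IsEmpty (pathGraph k ↪g Γ)) : IsChordal Γ := fun n hn => by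
  rcases Nat.lt_or_ge k n with hkn | hnk
  · obtain ⟨e⟩ := nonempty_pathGraph_embedding_cycleGraph hkn
    exact ⟨fun f => hpath.false (f.comp e)⟩
  · exact hcycle n hn hnk

theorem eq_add_one_iff_val {n : ℕ} (i j : Fin (n + 2)) :
    i = j + 1 ↔ i.val = j.val + 1 ∨ (i.val = 0 ∧ j.val = n + 1) := by
  rw [Fin.ext_iff, Fin.val_add_one]
  split_ifs with hj <;> simp only [Fin.ext_iff, Fin.val_last] at hj <;> omega

theorem not_isChordal_of_alternating {n : ℕ} {x t : Fin (n + 2) → V}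
    (hx_inj : Function.Injective x) (ht_inj : Function.Injective t)
    (hx : ∀ i j, ¬ Γ.Adj (x i) (x j)) (ht : ∀ i j, ¬ Γ.Adj (t i) (t j))
    (hxt : ∀ i j, Γ.Adj (x i) (t j) ↔ i = j ∨ i = j + 1) : ¬ IsChordal Γ := by
  have hx_ne (i j) : x i ≠ t j := fun h => hx j i (h ▸ (hxt j j).2 (Or.inl rfl))
  set f : Fin (2 * (n + 2)) → V := fun k =>
    if k.val % 2 = 0 then x ⟨k / 2, by omega⟩ else t ⟨k / 2, by omega⟩
  have hf_cases (k) : (∃ i, k.val = 2 * i.val ∧ f k = x i) ∨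
      (∃ i, k.val = 2 * i.val + 1 ∧ f k = t i) := by
    rcases Nat.mod_two_eq_zero_or_one k with hk | hk
    · exact Or.inl ⟨⟨k / 2, by omega⟩, by simp only; omega, if_pos hk⟩
    · exact Or.inr ⟨⟨k / 2, by omega⟩, by simp only; omega, if_neg (by omega)⟩
  have hf_inj : Function.Injective f := fun k l hkl => by
    rcases hf_cases k with ⟨i, hk, hfk⟩ | ⟨i, hk, hfk⟩ <;>
      rcases hf_cases l with ⟨j, hl, hfl⟩ | ⟨j, hl, hfl⟩ <;> rw [hfk, hfl] at hkl
    · have := congrArg Fin.val (hx_inj hkl)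
      omega
    · exact absurd hkl (hx_ne i j)
    · exact absurd hkl.symm (hx_ne j i)
    · have := congrArg Fin.val (ht_inj hkl)
      omega
  refine fun hΓ => (hΓ (2 * (n + 2)) (by omega)).false ⟨⟨f, hf_inj⟩, fun {k l} => ?_⟩
  rw [cycleGraph_adj_iff_val]
  change Γ.Adj (f k) (f l) ↔ _
  rcases hf_cases k with ⟨i, hk, hfk⟩ | ⟨i, hk, hfk⟩ <;>
    rcases hf_cases l with ⟨j, hl, hfl⟩ | ⟨j, hl, hfl⟩ <;> rw [hfk, hfl]
  · exact iff_of_false (hx i j) (by omega)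
  · rw [hxt, eq_add_one_iff_val]
    omega
  · rw [Γ.adj_comm, hxt, eq_add_one_iff_val]
    omega
  · exact iff_of_false (ht i j) (by omega)

end InducedPathsAndCycles

section Groups

variable {G : Type*} [Group G]

theorem mem_zpowers_of_orderOf_dvd [IsCyclic G] [Finite G] {a b : G}
    (hab : orderOf a ∣ orderOf b) : a ∈ zpowers b := by
  let _ : CommGroup G := IsCyclic.commGroup
  have hker : zpowers b = (powMonoidHom (orderOf b) : G →* G).ker := by
    refine eq_of_le_of_card_ge (zpowers_le.2 (pow_orderOf_eq_one b)) ?_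
    rw [IsCyclic.card_powMonoidHom_ker, Nat.card_zpowers]
    exact Nat.gcd_le_right _ (orderOf_pos b)
  rw [hker]
  exact orderOf_dvd_iff_pow_eq_one.1 hab

theorem mem_zpowers_of_mem_zpowers_of_orderOf_dvd {a b t : G} (ht : IsOfFinOrder t)
    (ha : a ∈ zpowers t) (hb : b ∈ zpowers t) (hab : orderOf a ∣ orderOf b) :
    a ∈ zpowers b := by
  have : Finite (zpowers t) := ht.finite_zpowers
  have hmem : (⟨a, ha⟩ : zpowers t) ∈ zpowers ⟨b, hb⟩ :=
    mem_zpowers_of_orderOf_dvd (by simpa only [orderOf_mk] using hab)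
  simpa [MonoidHom.map_zpowers] using mem_map_of_mem (zpowers t).subtype hmem

theorem mem_zpowers_of_mem_zpowers_of_prime_orderOf {x c : G} (hx : (orderOf x).Prime)
    (hc : c ∈ zpowers x) (hc_ne : c ≠ 1) : x ∈ zpowers c := by
  have horder : orderOf c = orderOf x :=
    ((Nat.dvd_prime hx).1 (orderOf_dvd_of_mem_zpowers hc)).resolve_left
      (orderOf_eq_one_iff.not.2 hc_ne)
  exact mem_zpowers_of_mem_zpowers_of_orderOf_dvd (orderOf_pos_iff.1 hx.pos)
    (mem_zpowers x) hc horder.symm.dvd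

theorem zpowers_le_centralizer_zpowers {x y : G} :
    zpowers x ≤ centralizer (zpowers y : Set G) ↔ Commute x y := by
  rw [zpowers_eq_closure y, centralizer_closure, zpowers_le, mem_centralizer_singleton_iff]
  rfl

theorem normalizerMonoidHom_zpowers_eq_one_iff {a : G}
    {g : normalizer (zpowers a : Set G)} :
    (zpowers a).normalizerMonoidHom g = 1 ↔ Commute a g := by
  rw [← MonoidHom.mem_ker, normalizerMonoidHom_ker, mem_subgroupOf, ← zpowers_le,
    zpowers_le_centralizer_zpowers, Commute.symm_iff]

-- The automorphism group of a cyclic group is abelian.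
theorem commute_commutatorElement_of_mem_normalizer {a x y : G}
    (hx : x ∈ normalizer (zpowers a : Set G)) (hy : y ∈ normalizer (zpowers a : Set G)) :
    Commute a ⁅x, y⁆ := by
  set ψ := (zpowers a).normalizerMonoidHom
  suffices hker : ψ ⁅(⟨x, hx⟩ : normalizer (zpowers a : Set G)), ⟨y, hy⟩⁆ = 1 from
    normalizerMonoidHom_zpowers_eq_one_iff.1 hker
  rw [map_commutatorElement, ← (IsCyclic.mulAutMulEquiv (zpowers a)).map_eq_one_iff,
    map_commutatorElement]
  exact commutatorElement_eq_one_iff_commute.2 (Commute.all _ _)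

theorem commute_of_not_commute_of_mem_normalizer {a x y : G}
    (hx : x ∈ normalizer (zpowers a : Set G)) (hy : y ∈ normalizer (zpowers a : Set G))
    (hx_prime : (orderOf x).Prime) (hax : ¬ Commute a x)
    (hyx : y ∈ normalizer (zpowers x : Set G)) : Commute x y := by
  by_contra hxy
  have hmem : ⁅x, y⁆ ∈ zpowers x := by
    rw [commutatorElement_def, mul_assoc, mul_assoc]
    refine mul_mem (mem_zpowers x) ?_
    rw [← mul_assoc]
    exact (mem_normalizer_iff.1 hyx _).1 (inv_mem (mem_zpowers x))
  have hx_mem := mem_zpowers_of_mem_zpowers_of_prime_orderOf hx_prime hmem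
    (commutatorElement_eq_one_iff_commute.not.2 hxy)
  obtain ⟨k, hk⟩ := hx_mem
  refine hax ?_
  rw [← hk]
  exact (commute_commutatorElement_of_mem_normalizer hx hy).zpow_right k

-- The automorphism group of `⟨a⟩` is cyclic, so `y` acts on `⟨a⟩` as a power of `x`.
theorem exists_commute_mul_zpow {a x y : G}
    (hx : x ∈ normalizer (zpowers a : Set G)) (hy : y ∈ normalizer (zpowers a : Set G))
    (ha : (orderOf a).Prime) (hx_prime : (orderOf x).Prime)
    (hax : ¬ Commute a x) (hyx : orderOf y ∣ orderOf x) : ∃ k : ℤ, Commute a (y * x ^ k) := by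
  set ψ := (zpowers a).normalizerMonoidHom
  have : Fact (Nat.card (zpowers a)).Prime := ⟨by rwa [Nat.card_zpowers]⟩
  let e := IsCyclic.mulAutMulEquiv (zpowers a)
  have : Finite (MulAut (zpowers a)) := Finite.of_equiv _ e.symm.toEquiv
  have : IsCyclic (MulAut (zpowers a)) := e.isCyclic.2 inferInstance
  have hψx : orderOf (ψ ⟨x, hx⟩) = orderOf x := by
    have hdvd := orderOf_map_dvd ψ ⟨x, hx⟩
    rw [orderOf_mk] at hdvd
    exact ((Nat.dvd_prime hx_prime).1 hdvd).resolve_left fun h =>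
      hax (normalizerMonoidHom_zpowers_eq_one_iff.1 (orderOf_eq_one_iff.1 h))
  have hψy : orderOf (ψ ⟨y, hy⟩) ∣ orderOf (ψ ⟨x, hx⟩) := by
    have hdvd := orderOf_map_dvd ψ ⟨y, hy⟩
    rw [orderOf_mk] at hdvd
    exact hψx ▸ hdvd.trans hyx
  obtain ⟨k, hk⟩ := mem_zpowers_iff.1 (mem_zpowers_of_orderOf_dvd hψy)
  have hker : ψ (⟨y, hy⟩ * ⟨x, hx⟩ ^ (-k)) = 1 := by
    rw [map_mul, map_zpow, ← hk, ← zpow_add, add_neg_cancel, zpow_zero]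
  exact ⟨-k, normalizerMonoidHom_zpowers_eq_one_iff.1 hker⟩

theorem orderOf_mul_zpow_of_prime {x y : G} (hxy : Commute x y) (hx : (orderOf x).Prime)
    (horder : orderOf x = orderOf y) (hy : y ∉ zpowers x) (k : ℤ) :
    orderOf (y * x ^ k) = orderOf x := by
  have := Fact.mk hx
  have hxk : x ^ k ∈ zpowers x := zpow_mem (mem_zpowers x) k
  refine orderOf_eq_prime ?_ fun h => hy ?_
  · rw [(hxy.symm.zpow_right k).mul_pow,
      orderOf_dvd_iff_pow_eq_one.1 (orderOf_dvd_of_mem_zpowers hxk), horder, pow_orderOf_eq_one,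
      one_mul]
  · rw [eq_inv_of_mul_eq_one_left h]
    exact inv_mem hxk

/-- The graph on the subgroups of prime order of `G` in which two of them are adjacent when they
have different orders and commute elementwise; all other subgroups are isolated vertices. -/
def primeCommutingGraph (G : Type*) [Group G] : SimpleGraph (Subgroup G) where
  Adj A B := (Nat.card A).Prime ∧ (Nat.card B).Prime ∧ Nat.card A ≠ Nat.card B ∧
    A ≤ centralizer (B : Set G)
  symm := ⟨fun _ _ ⟨hA, hB, hne, hAB⟩ => ⟨hB, hA, hne.symm, le_centralizer_iff.1 hAB⟩⟩
  loopless := ⟨fun _ h => h.2.2.1 rfl⟩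

theorem primeCommutingGraph_adj_zpowers {x y : G} :
    (primeCommutingGraph G).Adj (zpowers x) (zpowers y) ↔
      (orderOf x).Prime ∧ (orderOf y).Prime ∧ orderOf x ≠ orderOf y ∧ Commute x y := by
  simp only [primeCommutingGraph, Nat.card_zpowers, zpowers_le_centralizer_zpowers]

section ConjugationAction

open scoped Pointwise

theorem centralizer_smul {α : Type*} [Group α] [MulDistribMulAction α G] (g : α)
    (H : Subgroup G) :
    centralizer ((g • H : Subgroup G) : Set G) = g • centralizer (H : Set G) := by
  ext x
  simp only [mem_pointwise_smul_iff_inv_smul_mem, mem_centralizer_iff, coe_pointwise_smul,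
    Set.mem_smul_set, forall_exists_index, and_imp, forall_apply_eq_imp_iff₂, SetLike.mem_coe]
  refine forall₂_congr fun h _ => ?_
  rw [← smul_left_cancel_iff g⁻¹, smul_mul', smul_mul', inv_smul_smul]

theorem primeCommutingGraph_adj_smul {α : Type*} [Group α] [MulDistribMulAction α G] (g : α)
    {A B : Subgroup G} :
    (primeCommutingGraph G).Adj (g • A) (g • B) ↔ (primeCommutingGraph G).Adj A B := by
  have hcard (H : Subgroup G) : Nat.card (g • H : Subgroup G) = Nat.card H :=
    Nat.card_congr (equivSMul g H).symm.toEquiv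
  simp only [primeCommutingGraph, hcard, centralizer_smul, pointwise_smul_le_pointwise_smul_iff]

/-- The action of `G` by conjugation on its subgroups, as automorphisms of
`primeCommutingGraph G`. -/
def conjPrimeCommutingGraph (G : Type*) [Group G] :
    G →* (primeCommutingGraph G ≃g primeCommutingGraph G) where
  toFun g := ⟨MulAction.toPerm (ConjAct.toConjAct g),
    primeCommutingGraph_adj_smul (ConjAct.toConjAct g)⟩
  map_one' := by ext1 A; simp
  map_mul' g h := by ext1 A; exact mul_smul (ConjAct.toConjAct g) (ConjAct.toConjAct h) A

theorem conjPrimeCommutingGraph_apply_eq_self_iff {g : G} {A : Subgroup G} :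
    conjPrimeCommutingGraph G g A = A ↔ g ∈ normalizer (A : Set G) :=
  conjAct_pointwise_smul_iff

end ConjugationAction

section Walks

variable {x : ℕ → G}

theorem IsNonbacktracking.exists_not_mem_normalizer (hF : (primeCommutingGraph G).IsAcyclic)
    (hs : IsNonbacktracking (primeCommutingGraph G) 5 (fun i => zpowers (x i))) :
    ∃ i j, i ≤ j ∧ j ≤ 5 ∧ x j ∉ normalizer (zpowers (x i) : Set G) := by
  by_contra! hN
  have hadj (i : ℕ) (hi : i < 5) := primeCommutingGraph_adj_zpowers.1 (hs.adj i hi)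
  obtain ⟨hx3, hx4, h34, hcomm34⟩ := hadj 3 (by omega)
  obtain ⟨-, hx5, -, hcomm45⟩ := hadj 4 (by omega)
  obtain ⟨m, hm, hm3⟩ : ∃ m ≤ 1, orderOf (x m) ≠ orderOf (x 3) := by
    by_contra! h
    exact (hadj 0 (by omega)).2.2.1 ((h 0 zero_le_one).trans (h 1 le_rfl).symm)
  have hxm : (orderOf (x m)).Prime := (hadj m (by omega)).1
  have hcommm3 : ¬ Commute (x m) (x 3) := fun hcomm =>
    hs.not_adj hF (i := m) (j := 3) (by omega) (by omega)
      (primeCommutingGraph_adj_zpowers.2 ⟨hxm, hx3, hm3, hcomm⟩)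
  have hN3 := hN m 3 (by omega) (by omega)
  have hN5 := hN m 5 (by omega) le_rfl
  have hcomm35 : Commute (x 3) (x 5) :=
    commute_of_not_commute_of_mem_normalizer hN3 hN5 hx3 hcommm3 (hN 3 5 (by omega) le_rfl)
  have h35 : orderOf (x 3) = orderOf (x 5) := by
    by_contra hne
    exact hs.not_adj hF (i := 3) (j := 5) (by omega) le_rfl
      (primeCommutingGraph_adj_zpowers.2 ⟨hx3, hx5, hne, hcomm35⟩)
  have hx5_notMem : x 5 ∉ zpowers (x 3) := fun hmem => by
    refine hs.ne 3 le_rfl (le_antisymm (zpowers_le.2 ?_) (zpowers_le.2 hmem))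
    refine mem_zpowers_of_mem_zpowers_of_prime_orderOf hx3 hmem fun h => ?_
    simp [h, Nat.not_prime_one] at hx5
  obtain ⟨k, hk⟩ := exists_commute_mul_zpow hN3 hN5 hxm hx3 hcommm3 h35.symm.dvd
  have hw := orderOf_mul_zpow_of_prime hcomm35 hx3 h35 hx5_notMem k
  have hadj_m : (primeCommutingGraph G).Adj (zpowers (x m)) (zpowers (x 5 * x 3 ^ k)) :=
    primeCommutingGraph_adj_zpowers.2 ⟨hxm, hw ▸ hx3, hw ▸ hm3, hk⟩
  have hadj_4 : (primeCommutingGraph G).Adj (zpowers (x 5 * x 3 ^ k)) (zpowers (x 4)) :=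
    primeCommutingGraph_adj_zpowers.2 ⟨hw ▸ hx3, hx4, hw ▸ h34,
      (hcomm45.symm.mul_left (hcomm34.zpow_left k))⟩
  exact hs.not_adj_of_adj hF (i := m) (j := 4) (by omega) (by omega) hadj_m hadj_4

theorem IsNonbacktracking.exists_not_mem_normalizer_of_le_four
    (hF : (primeCommutingGraph G).IsAcyclic)
    (hs : IsNonbacktracking (primeCommutingGraph G) 9 (fun i => zpowers (x i))) {m : ℕ}
    (hm : m ≤ 4) : ∃ i ≤ 9, x i ∉ normalizer (zpowers (x m) : Set G) := by
  by_contra! hN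
  obtain ⟨i, j, hij, hj, hnot⟩ :=
    (hs.shift (m := 4) (k := 5) le_rfl).exists_not_mem_normalizer (x := fun i => x (4 + i)) hF
  refine hnot (conjPrimeCommutingGraph_apply_eq_self_iff.1 ?_)
  refine hs.apply_eq_of_between hF (i := m) (j := 4 + j) (by omega) (by omega) (by omega) ?_ ?_
  · exact conjPrimeCommutingGraph_apply_eq_self_iff.2 (hN (4 + j) (by omega))
  · exact conjPrimeCommutingGraph_apply_eq_self_iff.2 (le_normalizer (mem_zpowers _))

theorem not_isNonbacktracking_nine (hG : IsMulTorsion G)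
    (hF : (primeCommutingGraph G).IsAcyclic) :
    ¬ IsNonbacktracking (primeCommutingGraph G) 9 (fun i => zpowers (x i)) := fun hs => by
  obtain ⟨m, hm, hfix⟩ := hs.exists_forall_fixed hF
    (f := fun i => conjPrimeCommutingGraph G (x i))
    (fun i _ => conjPrimeCommutingGraph_apply_eq_self_iff.2 (le_normalizer (mem_zpowers _)))
    (fun i j => by
      rw [← map_mul]
      exact (conjPrimeCommutingGraph G).isOfFinOrder (hG _))
  simp only [conjPrimeCommutingGraph_apply_eq_self_iff] at hfix
  rcases Nat.lt_or_ge 4 m with hm4 | hm4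
  · obtain ⟨i, hi, hnot⟩ := hs.reverse.exists_not_mem_normalizer_of_le_four
      (x := fun i => x (9 - i)) hF (m := 9 - m) (by omega)
    simp only [show 9 - (9 - m) = m by omega] at hnot
    exact hnot (hfix (9 - i) (by omega))
  · obtain ⟨i, hi, hnot⟩ := hs.exists_not_mem_normalizer_of_le_four hF hm4
    exact hnot (hfix i hi)

end Walks

end Groups

section PowerGraphs

variable {G : Type*} [Group G]

theorem powerGraph_adj {x y : G} :
    (powerGraph G).Adj x y ↔ x ≠ y ∧ (x ∈ zpowers y ∨ y ∈ zpowers x) :=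
  fromRel_adj _ _ _

theorem mem_zpowers_trans {x y z : G} (hxy : x ∈ zpowers y) (hyz : y ∈ zpowers z) :
    x ∈ zpowers z :=
  zpowers_le.2 hyz hxy

theorem not_isChordal_powerGraph_of_alternating {n : ℕ} {x t : Fin (n + 2) → G}
    (hx : ∀ i j, x i ∈ zpowers (x j) → i = j) (ht : ∀ i j, t i ∈ zpowers (t j) → i = j)
    (hxt : ∀ i j, x i ∈ zpowers (t j) ↔ i = j ∨ i = j + 1) : ¬ IsChordal (powerGraph G) := by
  have htx (i j) : t j ∉ zpowers (x i) := fun h => by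
    have hj := hx j i (mem_zpowers_trans ((hxt j j).2 (Or.inl rfl)) h)
    have hj' := hx (j + 1) i (mem_zpowers_trans ((hxt (j + 1) j).2 (Or.inr rfl)) h)
    simpa using hj'.trans hj.symm
  have hx_inj : Function.Injective x := fun i j h => hx i j (h ▸ mem_zpowers _)
  have ht_inj : Function.Injective t := fun i j h => ht i j (h ▸ mem_zpowers _)
  refine not_isChordal_of_alternating hx_inj ht_inj ?_ ?_ fun i j => ?_
  · rintro i j h
    obtain ⟨hne, h | h⟩ := powerGraph_adj.1 h
    exacts [hne (congrArg x (hx i j h)), hne (congrArg x (hx j i h).symm)]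
  · rintro i j h
    obtain ⟨hne, h | h⟩ := powerGraph_adj.1 h
    exacts [hne (congrArg t (ht i j h)), hne (congrArg t (ht j i h).symm)]
  · have hne : x i ≠ t j := fun h => htx i j (h ▸ mem_zpowers _)
    simp only [powerGraph_adj, ne_eq, hne, not_false_eq_true, htx i j, or_false, true_and, hxt]

theorem mem_zpowers_mul_of_coprime {x y : G} (hxy : Commute x y)
    (hcop : (orderOf x).Coprime (orderOf y)) : x ∈ zpowers (x * y) := by
  obtain ⟨m, hm⟩ := exists_pow_eq_self_of_coprime (x := x) hcop.symm
  have hpow : x ^ orderOf y ∈ zpowers (x * y) := by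
    rw [← mul_one (x ^ orderOf y), ← pow_orderOf_eq_one y, ← hxy.mul_pow]
    exact pow_mem (mem_zpowers _) _
  simpa only [hm] using pow_mem hpow m

theorem mem_zpowers_or_of_mem_zpowers_mul {x y z : G} (hxy : Commute x y)
    (hcop : (orderOf x).Coprime (orderOf y)) (hfin : IsOfFinOrder (x * y))
    (hz : (orderOf z).Prime) (hmem : z ∈ zpowers (x * y)) : z ∈ zpowers x ∨ z ∈ zpowers y := by
  have hx := mem_zpowers_mul_of_coprime hxy hcop
  have hy := mem_zpowers_mul_of_coprime hxy.symm hcop.symm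
  have hdvd := orderOf_dvd_of_mem_zpowers hmem
  rw [hxy.orderOf_mul_eq_mul_orderOf_of_coprime hcop, hz.dvd_mul] at hdvd
  exact hdvd.imp (mem_zpowers_of_mem_zpowers_of_orderOf_dvd hfin hmem hx)
    (mem_zpowers_of_mem_zpowers_of_orderOf_dvd hfin hmem (hxy.eq ▸ hy))

theorem not_isChordal_of_prime_cycle {n : ℕ} {x : Fin (n + 3) → G}
    (hinj : Function.Injective fun i => zpowers (x i))
    (hadj : ∀ i, (primeCommutingGraph G).Adj (zpowers (x i)) (zpowers (x (i + 1)))) :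
    ¬ IsChordal (powerGraph G) := by
  simp only [primeCommutingGraph_adj_zpowers] at hadj
  have hprime (i) : (orderOf (x i)).Prime := (hadj i).1
  have hfin (i) : IsOfFinOrder (x i) := orderOf_pos_iff.1 (hprime i).pos
  have hcop (i) : (orderOf (x i)).Coprime (orderOf (x (i + 1))) :=
    (Nat.coprime_primes (hprime i) (hprime _)).2 (hadj i).2.2.1
  have hcomm (i) : Commute (x i) (x (i + 1)) := (hadj i).2.2.2
  have hx (i j) (h : x i ∈ zpowers (x j)) : i = j := by
    refine hinj (le_antisymm (zpowers_le.2 h) (zpowers_le.2 ?_))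
    refine mem_zpowers_of_mem_zpowers_of_prime_orderOf (hprime j) h fun h1 => ?_
    exact (hprime i).ne_one (orderOf_eq_one_iff.2 h1)
  have hmem (i) : x i ∈ zpowers (x i * x (i + 1)) := mem_zpowers_mul_of_coprime (hcomm i) (hcop i)
  have hmem' (i) : x (i + 1) ∈ zpowers (x i * x (i + 1)) := by
    rw [(hcomm i).eq]
    exact mem_zpowers_mul_of_coprime (hcomm i).symm (hcop i).symm
  have hxt (i j) : x i ∈ zpowers (x j * x (j + 1)) ↔ i = j ∨ i = j + 1 := by
    refine ⟨fun h => ?_, ?_⟩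
    · have hfin : IsOfFinOrder (x j * x (j + 1)) :=
        (hcomm j).isOfFinOrder_mul (hfin j) (hfin (j + 1))
      exact (mem_zpowers_or_of_mem_zpowers_mul (hcomm j) (hcop j) hfin (hprime i) h).imp
        (hx _ _) (hx _ _)
    · rintro (rfl | rfl)
      exacts [hmem i, hmem' j]
  refine not_isChordal_powerGraph_of_alternating (n := n + 1) hx (fun i j h => ?_) hxt
  rcases (hxt i j).1 (mem_zpowers_trans (hmem i) h) with rfl | rfl
  · rfl
  · have hwrap := (hxt _ j).1 (mem_zpowers_trans (hmem' (j + 1)) h)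
    simp only [add_assoc, add_eq_left, add_right_inj] at hwrap
    simp [Fin.ext_iff, Fin.val_add, Nat.mod_eq_of_lt (show 2 < n + 3 by omega)] at hwrap

theorem exists_zpowers_eq_of_prime_card {A : Subgroup G} (hA : (Nat.card A).Prime) :
    ∃ x, zpowers x = A := by
  have := Fact.mk hA
  exact Subgroup.isCyclic_iff_exists_zpowers_eq_top A |>.1 (isCyclic_of_prime_card rfl)

theorem IsChordal.isAcyclic_primeCommutingGraph (hG : IsChordal (powerGraph G)) :
    (primeCommutingGraph G).IsAcyclic := by
  rw [isAcyclic_iff_free_cycleGraph]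
  rintro n hn ⟨c⟩
  obtain ⟨n, rfl⟩ := Nat.exists_eq_add_of_le' hn
  have hadj (i) : (primeCommutingGraph G).Adj (c i) (c (i + 1)) :=
    c.toHom.map_adj (by simp [cycleGraph_adj])
  choose x hx using fun i => exists_zpowers_eq_of_prime_card (hadj i).1
  refine not_isChordal_of_prime_cycle (x := x) ?_ (fun i => ?_) hG
  · simp only [hx]
    exact c.injective
  · simpa only [hx] using hadj i

end PowerGraphs

section Chordal

variable {G : Type*} [Group G]

theorem IsChordal.mem_zpowers_or_mem_zpowers (hG : IsChordal (powerGraph G)) {a b s t : G}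
    (hst : s ∉ zpowers t) (hts : t ∉ zpowers s) (has : a ∈ zpowers s) (hat : a ∈ zpowers t)
    (hbs : b ∈ zpowers s) (hbt : b ∈ zpowers t) : a ∈ zpowers b ∨ b ∈ zpowers a := by
  by_contra! hab
  refine not_isChordal_powerGraph_of_alternating (n := 0) (x := ![a, b]) (t := ![s, t])
    ?_ ?_ ?_ hG <;> simp [Fin.forall_fin_two, *]

-- In an infinite cyclic group `⟨g⟩`, the powers `g ^ 2, g ^ 12, g ^ 3, g ^ 18` form an induced
-- 4-cycle.
theorem IsChordal.isMulTorsion (hG : IsChordal (powerGraph G)) : IsMulTorsion G := fun g => by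
  by_contra hg
  have hmem (k l : ℤ) : g ^ k ∈ zpowers (g ^ l) ↔ l ∣ k := by
    simp only [mem_zpowers_iff, ← zpow_mul, (injective_zpow_iff_not_isOfFinOrder.2 hg).eq_iff,
      dvd_def, eq_comm]
  have := hG.mem_zpowers_or_mem_zpowers (a := g ^ (12 : ℤ)) (b := g ^ (18 : ℤ))
    (s := g ^ (2 : ℤ)) (t := g ^ (3 : ℤ))
  simp only [hmem] at this
  omega

theorem IsChordal.eq_of_prime_dvd_orderOf (hG : IsChordal (powerGraph G)) {a b s t : G}
    (hst : s ∉ zpowers t) (hts : t ∉ zpowers s) (has : a ∈ zpowers s) (hat : a ∈ zpowers t)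
    (hbs : b ∈ zpowers s) (hbt : b ∈ zpowers t) {p q : ℕ} (hp : p.Prime) (hq : q.Prime)
    (hpa : p ∣ orderOf a) (hqb : q ∣ orderOf b) : p = q := by
  have ha : orderOf (a ^ (orderOf a / p)) = p :=
    orderOf_pow_orderOf_div (hG.isMulTorsion a).orderOf_pos.ne' hpa
  have hb : orderOf (b ^ (orderOf b / q)) = q :=
    orderOf_pow_orderOf_div (hG.isMulTorsion b).orderOf_pos.ne' hqb
  rcases hG.mem_zpowers_or_mem_zpowers hst hts (pow_mem has _) (pow_mem hat _)
    (pow_mem hbs (orderOf b / q)) (pow_mem hbt _) with h | h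
  · have hdvd := orderOf_dvd_of_mem_zpowers h
    rwa [ha, hb, Nat.prime_dvd_prime_iff_eq hp hq] at hdvd
  · have hdvd := orderOf_dvd_of_mem_zpowers h
    rwa [ha, hb, Nat.prime_dvd_prime_iff_eq hq hp, eq_comm] at hdvd

theorem exists_prime_dvd_orderOf_not_dvd {x y t : G} (ht : IsOfFinOrder t)
    (hxt : x ∈ zpowers t) (hyt : y ∈ zpowers t) (hxy : x ∉ zpowers y) (hyx : y ∉ zpowers x)
    (hy : ∀ p q : ℕ, p.Prime → q.Prime → p ∣ orderOf y → q ∣ orderOf y → p = q) :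
    ∃ q : ℕ, q.Prime ∧ q ∣ orderOf x ∧ ¬ q ∣ orderOf y := by
  by_contra! hdvd
  obtain ⟨p, hp, hpy⟩ := Nat.exists_prime_and_dvd (n := orderOf y) fun h =>
    hyx (orderOf_eq_one_iff.1 h ▸ one_mem _)
  have hx_pow := Nat.eq_prime_pow_of_unique_prime_dvd (p := p)
    (ht.of_mem_zpowers hxt).orderOf_pos.ne' fun hd hdx => hy _ _ hd hp (hdvd _ hd hdx) hpy
  have hy_pow := Nat.eq_prime_pow_of_unique_prime_dvd (p := p)
    (ht.of_mem_zpowers hyt).orderOf_pos.ne' fun hd hdy => hy _ _ hd hp hdy hpy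
  rcases le_total (orderOf x).primeFactorsList.length (orderOf y).primeFactorsList.length
    with hle | hle
  · refine hxy (mem_zpowers_of_mem_zpowers_of_orderOf_dvd ht hxt hyt ?_)
    rw [hx_pow, hy_pow]
    exact pow_dvd_pow p hle
  · refine hyx (mem_zpowers_of_mem_zpowers_of_orderOf_dvd ht hyt hxt ?_)
    rw [hx_pow, hy_pow]
    exact pow_dvd_pow p hle

/-- The sequence `b 0, t 0, b 1, t 1, …, b (m - 1), t (m - 1)` is an induced path of the power
graph of `G` in which every `b i` is a power of its neighbours. Only the nonadjacencies among the
`b i` and among the `t i` are recorded. -/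
structure IsZigzag (m : ℕ) (b t : ℕ → G) : Prop where
  mem : ∀ i < m, b i ∈ zpowers (t i)
  mem_succ : ∀ i, i + 1 < m → b (i + 1) ∈ zpowers (t i)
  eq_of_bot_mem : ∀ i < m, ∀ j < m, b i ∈ zpowers (b j) → i = j
  eq_of_top_mem : ∀ i < m, ∀ j < m, t i ∈ zpowers (t j) → i = j

namespace IsZigzag

variable {m : ℕ} {b t : ℕ → G}

theorem eq_of_prime_dvd_orderOf (hz : IsZigzag m b t) (hG : IsChordal (powerGraph G)) {i : ℕ}
    (hi : i + 1 < m) {x y : G} (hx : x ∈ zpowers (t i)) (hx' : x ∈ zpowers (t (i + 1)))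
    (hy : y ∈ zpowers (t i)) (hy' : y ∈ zpowers (t (i + 1))) {p q : ℕ} (hp : p.Prime)
    (hq : q.Prime) (hpx : p ∣ orderOf x) (hqy : q ∣ orderOf y) : p = q := by
  refine hG.eq_of_prime_dvd_orderOf (fun h => ?_) (fun h => ?_) hx hx' hy hy' hp hq hpx hqy
  · have := hz.eq_of_top_mem i (by omega) (i + 1) hi h
    omega
  · have := hz.eq_of_top_mem (i + 1) hi i (by omega) h
    omega

theorem exists_prime_dvd_orderOf (hz : IsZigzag m b t) (hG : IsChordal (powerGraph G)) {i : ℕ}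
    (hi : i + 1 < m) : ∃ q : ℕ, q.Prime ∧ q ∣ orderOf (b i) ∧ ¬ q ∣ orderOf (b (i + 1)) := by
  refine exists_prime_dvd_orderOf_not_dvd (hG.isMulTorsion (t i)) (hz.mem i (by omega))
    (hz.mem_succ i hi) (fun h => ?_) (fun h => ?_) fun p q hp hq => ?_
  · have := hz.eq_of_bot_mem i (by omega) (i + 1) hi h
    omega
  · have := hz.eq_of_bot_mem (i + 1) hi i (by omega) h
    omega
  · exact hz.eq_of_prime_dvd_orderOf hG hi (hz.mem_succ i hi) (hz.mem _ hi) (hz.mem_succ i hi)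
      (hz.mem _ hi) hp hq

theorem exists_prime_orderOf_mem (hz : IsZigzag m b t) (hm : 1 < m)
    (hG : IsChordal (powerGraph G)) (i : ℕ) (hi : i < m) :
    ∃ y ∈ zpowers (b i), (orderOf y).Prime ∧
      (i + 1 < m → ¬ orderOf y ∣ orderOf (b (i + 1))) := by
  obtain ⟨q, hq, hqb, hqb'⟩ : ∃ q : ℕ, q.Prime ∧ q ∣ orderOf (b i) ∧
      (i + 1 < m → ¬ q ∣ orderOf (b (i + 1))) := by
    rcases Nat.lt_or_ge (i + 1) m with hi' | hi'
    · obtain ⟨q, hq, hqb, hqb'⟩ := hz.exists_prime_dvd_orderOf hG hi'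
      exact ⟨q, hq, hqb, fun _ => hqb'⟩
    · obtain ⟨q, hq, hqb⟩ := Nat.exists_prime_and_dvd (n := orderOf (b i)) fun h => by
        have := hz.eq_of_bot_mem i hi 0 (by omega) (orderOf_eq_one_iff.1 h ▸ one_mem _)
        omega
      exact ⟨q, hq, hqb, fun h => absurd h hi'.not_gt⟩
  have hy : orderOf (b i ^ (orderOf (b i) / q)) = q :=
    orderOf_pow_orderOf_div (hG.isMulTorsion (b i)).orderOf_pos.ne' hqb
  exact ⟨_, pow_mem (mem_zpowers _) _, by rwa [hy], by rwa [hy]⟩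

theorem exists_isNonbacktracking (hz : IsZigzag (m + 2) b t) (hG : IsChordal (powerGraph G)) :
    ∃ y : ℕ → G, IsNonbacktracking (primeCommutingGraph G) (m + 1) (fun i => zpowers (y i)) := by
  choose! y hyb hy_prime hy_dvd using hz.exists_prime_orderOf_mem (by omega) hG
  have hyt (i) (hi : i < m + 2) : y i ∈ zpowers (t i) := mem_zpowers_trans (hyb i hi) (hz.mem i hi)
  have hyt' (i) (hi : i + 1 < m + 2) : y (i + 1) ∈ zpowers (t i) :=
    mem_zpowers_trans (hyb (i + 1) hi) (hz.mem_succ i hi)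
  refine ⟨y, fun i hi => ?_, fun i hi h => ?_⟩
  · refine primeCommutingGraph_adj_zpowers.2 ⟨hy_prime i (by omega), hy_prime (i + 1) (by omega),
      fun h => ?_, ?_⟩
    · exact hy_dvd i (by omega) (by omega)
        (h ▸ orderOf_dvd_of_mem_zpowers (hyb (i + 1) (by omega)))
    · obtain ⟨k, hk⟩ := hyt i (by omega)
      obtain ⟨l, hl⟩ := hyt' i (by omega)
      rw [← hk, ← hl]
      exact Commute.zpow_zpow_self _ k l
  · have hyi : y i ∈ zpowers (t (i + 1)) :=
      mem_zpowers_trans (h ▸ mem_zpowers (y i)) (hyt' (i + 1) (by omega))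
    have horder : orderOf (y i) = orderOf (y (i + 1)) :=
      hz.eq_of_prime_dvd_orderOf hG (by omega) (hyt i (by omega)) hyi (hyt' i (by omega))
        (hyt (i + 1) (by omega)) (hy_prime i (by omega)) (hy_prime (i + 1) (by omega))
        dvd_rfl dvd_rfl
    exact hy_dvd i (by omega) (by omega)
      (horder ▸ orderOf_dvd_of_mem_zpowers (hyb (i + 1) (by omega)))

end IsZigzag

namespace IsInducedPath

variable {n m : ℕ} {p : ℕ → G}

theorem mem_or_mem (hp : IsInducedPath (powerGraph G) n p) {k : ℕ} (hk : k + 1 < n) :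
    p k ∈ zpowers (p (k + 1)) ∨ p (k + 1) ∈ zpowers (p k) :=
  (powerGraph_adj.1 ((hp.adj_iff k (by omega) (k + 1) hk).2 (Or.inl rfl))).2

theorem eq_or_of_mem (hp : IsInducedPath (powerGraph G) n p) {k l : ℕ} (hk : k < n) (hl : l < n)
    (hmem : p k ∈ zpowers (p l)) : k = l ∨ k + 1 = l ∨ l + 1 = k := by
  by_cases hkl : p k = p l
  · exact Or.inl (hp.injOn hk hl hkl)
  · exact Or.inr ((hp.adj_iff k hk l hl).1 (powerGraph_adj.2 ⟨hkl, Or.inl hmem⟩))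

theorem succ_succ_mem (hp : IsInducedPath (powerGraph G) n p) {k : ℕ} (hk : k + 2 < n)
    (hmem : p k ∈ zpowers (p (k + 1))) : p (k + 2) ∈ zpowers (p (k + 1)) := by
  refine (hp.mem_or_mem hk).resolve_left fun h => ?_
  have := hp.eq_or_of_mem (by omega) hk (mem_zpowers_trans hmem h)
  omega

theorem mem_succ_succ (hp : IsInducedPath (powerGraph G) n p) {k : ℕ} (hk : k + 2 < n)
    (hmem : p (k + 1) ∈ zpowers (p k)) : p (k + 1) ∈ zpowers (p (k + 2)) := by
  refine (hp.mem_or_mem hk).resolve_right fun h => ?_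
  have := hp.eq_or_of_mem hk (by omega) (mem_zpowers_trans h hmem)
  omega

theorem even_mem (hp : IsInducedPath (powerGraph G) n p) (hmem : p 0 ∈ zpowers (p 1)) (i : ℕ)
    (hi : 2 * i + 1 < n) : p (2 * i) ∈ zpowers (p (2 * i + 1)) := by
  induction i with
  | zero => exact hmem
  | succ i ih =>
    exact hp.mem_succ_succ (k := 2 * i + 1) hi (hp.succ_succ_mem (by omega) (ih (by omega)))

theorem mem_even (hp : IsInducedPath (powerGraph G) n p) (hmem : p 1 ∈ zpowers (p 0)) (i : ℕ)
    (hi : 2 * i + 1 < n) : p (2 * i + 1) ∈ zpowers (p (2 * i)) := by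
  induction i with
  | zero => exact hmem
  | succ i ih =>
    exact hp.succ_succ_mem (k := 2 * i + 1) hi (hp.mem_succ_succ (by omega) (ih (by omega)))

theorem isZigzag (hp : IsInducedPath (powerGraph G) (2 * m) p) (hmem : p 0 ∈ zpowers (p 1)) :
    IsZigzag m (fun i => p (2 * i)) (fun i => p (2 * i + 1)) where
  mem i hi := hp.even_mem hmem i (by omega)
  mem_succ i hi := hp.succ_succ_mem (by omega) (hp.even_mem hmem i (by omega))
  eq_of_bot_mem i hi j hj h := by
    have := hp.eq_or_of_mem (by omega) (by omega) h
    omega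
  eq_of_top_mem i hi j hj h := by
    have := hp.eq_or_of_mem (by omega) (by omega) h
    omega

theorem exists_isZigzag (hp : IsInducedPath (powerGraph G) (2 * (m + 1)) p) :
    ∃ b t : ℕ → G, IsZigzag (m + 1) b t := by
  rcases hp.mem_or_mem (k := 0) (by omega) with hup | hdown
  · exact ⟨_, _, hp.isZigzag hup⟩
  · exact ⟨_, _, hp.reverse.isZigzag (hp.mem_even hdown m (by omega))⟩

end IsInducedPath

theorem IsChordal.isEmpty_pathGraph_twenty_embedding
    (hG : IsChordal (powerGraph G)) : IsEmpty (pathGraph 20 ↪g powerGraph G) := ⟨fun e => by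
  obtain ⟨b, t, hz⟩ := (IsInducedPath.of_embedding e).exists_isZigzag (m := 9)
  obtain ⟨y, hy⟩ := hz.exists_isNonbacktracking hG
  exact not_isNonbacktracking_nine hG.isMulTorsion hG.isAcyclic_primeCommutingGraph hy⟩

end Chordal

theorem stmt1_general (G : Type*) [Group G] :
    IsChordal (powerGraph G) ↔
      ((∀ n : ℕ, 4 ≤ n → n ≤ 20 → IsEmpty (SimpleGraph.cycleGraph n ↪g powerGraph G)) ∧
        IsEmpty (SimpleGraph.pathGraph 20 ↪g powerGraph G)) :=
  ⟨fun hG => ⟨fun n hn _ => hG n hn, hG.isEmpty_pathGraph_twenty_embedding⟩,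
    fun h => isChordal_of_isEmpty_embedding h.1 h.2⟩

theorem stmt1 (G : Type*) [Group G] [Fintype G] :
    IsChordal (powerGraph G) ↔
      ((∀ n : ℕ, 4 ≤ n → n ≤ 20 → IsEmpty (SimpleGraph.cycleGraph n ↪g powerGraph G)) ∧
        IsEmpty (SimpleGraph.pathGraph 20 ↪g powerGraph G)) :=
  stmt1_general G
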